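/- Let A = (Σ, Q, q0, δ, F) be an alternating safety automaton and p ∈ Σ. Let M_∃ ⊆ Q be any over-approximation of the states existentially in conflict for p, let A_∃ be the existential compilation of A with respect to M_∃ (states 2^{M_∃} ∪ (Q∖M_∃), disjunctive macro-state construction), and let A'_∃ = ∃°p.A_∃ be its state-wise existential quantification. Then L(A'_∃) = L(∃p.A). -/

import Mathlib

/-!
Since every state is accepting, a run tree matters only through the sets `S i` of states at
depth `i`: a word is accepted iff there are sets `S i` with the initial state in `S 0` such that
`S (i + 1)`, together with the literals true in the `i`-th letter, satisfies the transition formula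
of every state of `S i` (`mem_lang_iff`).

`L(∃p.A)` is contained in the language of the quantified compilation for every `M`
(`existsLang_subset`): all states at depth `i` choose the macro-state `S (i + 1) ∩ M` and the value
that the accepted word gives to `p`.

The converse (`langWithout_subset`) uses the conflict hypothesis. In a run of the quantified
compilation, distinct states may choose distinct values of `p` at the same timestep. Fix the
principal chain of macro-states chosen successively from the initial state, let every state of `A`
follow one compiled state standing for it, preferably the one in the principal chain, and shrink
its successor set to a minimal satisfying assignment. This gives an existential unfolding of `A`. If
it contained `p` and `¬p` at the same timestep, every state on a path from the root to either
literal would be in conflict with the state at the same timestep on a path to the other, hence lie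
in `M` (`ExUnfolding.mem_of_reach_lit`). Such paths stay inside the principal chain, where a single
value of `p` is chosen at each timestep, a contradiction. So the unfolding determines a value of `p`
at each timestep, and with it an extension of the word that `A` accepts.
-/

namespace ABAKC

/-- Positive Boolean formulas over variable type `α` (no negation). -/
inductive PosBool (α : Type) : Type
  | tt : PosBool α
  | ff : PosBool α
  | var : α → PosBool α
  | and : PosBool α → PosBool α → PosBool α
  | or : PosBool α → PosBool α → PosBool α

namespace PosBool

variable {α β : Type}

/-- Satisfaction of a positive Boolean formula by a set of variables. -/
def eval : PosBool α → Set α → Prop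
  | .tt, _ => True
  | .ff, _ => False
  | .var a, X => a ∈ X
  | .and f g, X => f.eval X ∧ g.eval X
  | .or f g, X => f.eval X ∨ g.eval X

/-- The minimal satisfying assignments of a positive Boolean formula. -/
def mSat (B : PosBool α) : Set (Set α) :=
  {X | B.eval X ∧ ∀ Y : Set α, Y ⊂ X → ¬ B.eval Y}

/-- Substitution of formulas for variables. -/
def bind : PosBool α → (α → PosBool β) → PosBool β
  | .tt, _ => .tt
  | .ff, _ => .ff
  | .var a, f => f a
  | .and g h, f => .and (g.bind f) (h.bind f)
  | .or g h, f => .or (g.bind f) (h.bind f)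

end PosBool

/-- Finite disjunction. -/
def bigOr {α : Type} : List (PosBool α) → PosBool α
  | [] => .ff
  | b :: l => .or b (bigOr l)

/-- Finite conjunction. -/
def bigAnd {α : Type} : List (PosBool α) → PosBool α
  | [] => .tt
  | b :: l => .and b (bigAnd l)

/-- Literals over the Boolean variables `V`: `(a, true)` is `a` and `(a, false)` is `¬a`. -/
abbrev Lit (V : Type) := V × Bool

/-- Infinite words over the alphabet `2^V`. -/
abbrev Word (V : Type) := ℕ → Set V

/-- An alternating Büchi automaton over Boolean variables `V` with state set `Q`:
transition formulas are positive Boolean formulas over states and literals. -/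
structure ABA (V : Type) (Q : Type) where
  init : Q
  tr : Q → PosBool (Q ⊕ Lit V)
  acc : Set Q

variable {V Q : Type}

/-- A literal holds in a letter `σ ⊆ V`. -/
def litHolds (σ : Set V) (l : Lit V) : Prop := l.1 ∈ σ ↔ l.2 = true

/-- A run of an alternating automaton on a word: a `(Q ⊕ Lit V)`-labeled tree whose root
is labeled with the initial state, such that the children labels of every state-labeled
node satisfy the state's transition formula, and literal labels are consistent with the word. -/
structure Run (A : ABA V Q) (w : Word V) where
  nodes : Set (List ℕ)
  label : List ℕ → Q ⊕ Lit V
  root_mem : [] ∈ nodes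
  prefix_closed : ∀ {m n : List ℕ}, n ∈ nodes → m <+: n → m ∈ nodes
  root_label : label [] = Sum.inl A.init
  step : ∀ n ∈ nodes, ∀ q : Q, label n = Sum.inl q →
    (A.tr q).eval {x | ∃ d : ℕ, n ++ [d] ∈ nodes ∧ label (n ++ [d]) = x}
  lit_ok : ∀ n ∈ nodes, ∀ l : Lit V, label n = Sum.inr l → litHolds (w (n.length - 1)) l

/-- A run is accepting if every infinite branch visits the acceptance set infinitely often. -/
def Run.Accepting {A : ABA V Q} {w : Word V} (ρ : Run A w) : Prop :=
  ∀ b : ℕ → ℕ, (∀ k : ℕ, (List.ofFn fun i : Fin k => b i) ∈ ρ.nodes) →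
    ∀ k : ℕ, ∃ j : ℕ, k ≤ j ∧ ∃ q ∈ A.acc,
      ρ.label (List.ofFn fun i : Fin j => b i) = Sum.inl q

/-- The language of an alternating Büchi automaton. -/
def ABA.lang (A : ABA V Q) : Set (Word V) := {w | ∃ ρ : Run A w, ρ.Accepting}

/-- A safety automaton: every state is accepting. -/
def ABA.Safety (A : ABA V Q) : Prop := A.acc = Set.univ

/-- Projection of a word onto `Σ ∖ {p}`. -/
def projWord (p : V) (t : Word V) : Word V := fun i => t i \ {p}

/-- The language of the automaton viewed over the alphabet `Σ ∖ {p}`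
(words never containing `p`). -/
def ABA.langWithout (A : ABA V Q) (p : V) : Set (Word V) :=
  {w | w ∈ A.lang ∧ ∀ i : ℕ, p ∉ w i}

/-- The existential quantification `∃p.A`: projections onto `Σ ∖ {p}` of words in `L(A)`. -/
def ABA.existsLang (A : ABA V Q) (p : V) : Set (Word V) :=
  {w | ∃ t ∈ A.lang, projWord p t = w}

/-- The universal quantification `∀p.A`: words over `Σ ∖ {p}` all of whose `p`-extensions
are in `L(A)`. -/
def ABA.forallLang (A : ABA V Q) (p : V) : Set (Word V) :=
  {w | (∀ i : ℕ, p ∉ w i) ∧ ∀ t : Word V, projWord p t = w → t ∈ A.lang}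

/-- Substitute the Boolean value `b` for the variable `p` in all `p`-literals of a
transition formula. -/
def substP [DecidableEq V] (p : V) (b : Bool) (B : PosBool (Q ⊕ Lit V)) :
    PosBool (Q ⊕ Lit V) :=
  B.bind fun x =>
    match x with
    | Sum.inl q => PosBool.var (Sum.inl q)
    | Sum.inr (a, c) =>
        if a = p then (if c = b then PosBool.tt else PosBool.ff)
        else PosBool.var (Sum.inr (a, c))

/-- State-wise existential quantification `∃°p.A`: replace each `δ(q)` by
`δ(q)[p↦1] ∨ δ(q)[p↦0]`. -/
def ABA.sExists [DecidableEq V] (A : ABA V Q) (p : V) : ABA V Q :=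
  { A with tr := fun q => PosBool.or (substP p true (A.tr q)) (substP p false (A.tr q)) }

/-- State-wise universal quantification `∀°p.A`: replace each `δ(q)` by
`δ(q)[p↦1] ∧ δ(q)[p↦0]`. -/
def ABA.sForall [DecidableEq V] (A : ABA V Q) (p : V) : ABA V Q :=
  { A with tr := fun q => PosBool.and (substP p true (A.tr q)) (substP p false (A.tr q)) }

/-- `A` is in existential normal form for `p`: the language of the state-wise existential
quantification (over the alphabet `Σ ∖ {p}`) equals the language of `∃p.A`. -/
def ExistentialNF [DecidableEq V] (A : ABA V Q) (p : V) : Prop :=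
  (A.sExists p).langWithout p = A.existsLang p

/-- `A` is in universal normal form for `p`: the language of the state-wise universal
quantification (over the alphabet `Σ ∖ {p}`) equals the language of `∀p.A`. -/
def UniversalNF [DecidableEq V] (A : ABA V Q) (p : V) : Prop :=
  (A.sForall p).langWithout p = A.forallLang p

/-- Projection of a transition formula to the states (literals replaced by `true`). -/
def projQ (B : PosBool (Q ⊕ Lit V)) : PosBool Q :=
  B.bind fun x =>
    match x with
    | Sum.inl q => PosBool.var q
    | Sum.inr _ => PosBool.tt

/-- A positive Boolean formula over states is (semantically) a disjunction of states. -/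
def IsDisjOfStates (B : PosBool Q) : Prop :=
  ∃ S : Set Q, ∀ X : Set Q, B.eval X ↔ ∃ q ∈ S, q ∈ X

/-- A positive Boolean formula over states is (semantically) a conjunction of states. -/
def IsConjOfStates (B : PosBool Q) : Prop :=
  ∃ S : Set Q, ∀ X : Set Q, B.eval X ↔ ∀ q ∈ S, q ∈ X

/-- `A` is nondeterministic: each transition formula, projected to the states,
is a disjunction of states. -/
def ABA.Nondet (A : ABA V Q) : Prop := ∀ q : Q, IsDisjOfStates (projQ (A.tr q))

/-- `A` is universal: each transition formula, projected to the states,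
is a conjunction of states. -/
def ABA.Universal (A : ABA V Q) : Prop := ∀ q : Q, IsConjOfStates (projQ (A.tr q))

/-- `A` is deterministic: both nondeterministic and universal. -/
def ABA.Deterministic (A : ABA V Q) : Prop := A.Nondet ∧ A.Universal

/-- Vertices of unfoldings: states or literals, paired with a timestep. -/
abbrev UVert (V Q : Type) := (Q ⊕ Lit V) × ℕ

/-- An existential unfolding of `A`: a DAG over `(Q ∪ L_Σ) × ℕ` rooted at `(q0, 0)`,
where every state vertex `(q, i)` has as successor set exactly `X × {i+1}` for one
chosen minimal satisfying assignment `X` of `δ(q)`, and every vertex is reachable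
from the root (smallest-sets condition). -/
structure ExUnfolding (A : ABA V Q) where
  verts : Set (UVert V Q)
  edges : Set (UVert V Q × UVert V Q)
  root_mem : (Sum.inl A.init, 0) ∈ verts
  edges_sub : ∀ e ∈ edges, e.1 ∈ verts ∧ e.2 ∈ verts
  edge_shape : ∀ e ∈ edges, (∃ q : Q, e.1.1 = Sum.inl q) ∧ e.2.2 = e.1.2 + 1
  succ : ∀ q : Q, ∀ i : ℕ, (Sum.inl q, i) ∈ verts →
    ∃ X ∈ (A.tr q).mSat,
      (∀ x ∈ X, (x, i + 1) ∈ verts ∧ ((Sum.inl q, i), (x, i + 1)) ∈ edges) ∧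
      (∀ u : UVert V Q, ((Sum.inl q, i), u) ∈ edges → u.2 = i + 1 ∧ u.1 ∈ X)
  minimal : ∀ v ∈ verts,
    Relation.ReflTransGen (fun a b => (a, b) ∈ edges) (Sum.inl A.init, 0) v

/-- Edge relation of an existential unfolding. -/
def ExUnfolding.edgeRel {A : ABA V Q} (U : ExUnfolding A) (a b : UVert V Q) : Prop :=
  (a, b) ∈ U.edges

/-- The existential syntactic condition for `p`: no existential unfolding contains both
`(p, i)` and `(¬p, i)` for any timestep `i`. -/
def ExSyntacticCond (A : ABA V Q) (p : V) : Prop :=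
  ∀ U : ExUnfolding A, ∀ i : ℕ,
    ¬ ((Sum.inr (p, true), i) ∈ U.verts ∧ (Sum.inr (p, false), i) ∈ U.verts)

/-- `X` covers the transition formula `B`: for every minimal satisfying assignment `X'`
of `B`, `X ∩ X' ∩ Q ≠ ∅` and `X' ∩ L_Σ ⊆ X`. -/
def Covers (B : PosBool (Q ⊕ Lit V)) (X : Set (Q ⊕ Lit V)) : Prop :=
  ∀ X' ∈ B.mSat,
    (∃ s : Q, Sum.inl s ∈ X ∧ Sum.inl s ∈ X') ∧
    ∀ l : Lit V, Sum.inr l ∈ X' → Sum.inr l ∈ X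

/-- A minimal covering set. -/
def MinCover (B : PosBool (Q ⊕ Lit V)) (X : Set (Q ⊕ Lit V)) : Prop :=
  Covers B X ∧ ∀ Y : Set (Q ⊕ Lit V), Y ⊂ X → ¬ Covers B Y

/-- A universal unfolding of `A`: a DAG over `(Q ∪ L_Σ) × ℕ` rooted at `(q0, 0)`,
where every state vertex `(q, i)` has as successor set exactly `X × {i+1}` for some
minimal set `X` that intersects every minimal satisfying assignment of `δ(q)` in a state
and contains all its literals, and every vertex is reachable from the root. -/
structure UnivUnfolding (A : ABA V Q) where
  verts : Set (UVert V Q)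
  edges : Set (UVert V Q × UVert V Q)
  root_mem : (Sum.inl A.init, 0) ∈ verts
  edges_sub : ∀ e ∈ edges, e.1 ∈ verts ∧ e.2 ∈ verts
  edge_shape : ∀ e ∈ edges, (∃ q : Q, e.1.1 = Sum.inl q) ∧ e.2.2 = e.1.2 + 1
  succ : ∀ q : Q, ∀ i : ℕ, (Sum.inl q, i) ∈ verts →
    ∃ X : Set (Q ⊕ Lit V), MinCover (A.tr q) X ∧
      (∀ x ∈ X, (x, i + 1) ∈ verts ∧ ((Sum.inl q, i), (x, i + 1)) ∈ edges) ∧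
      (∀ u : UVert V Q, ((Sum.inl q, i), u) ∈ edges → u.2 = i + 1 ∧ u.1 ∈ X)
  minimal : ∀ v ∈ verts,
    Relation.ReflTransGen (fun a b => (a, b) ∈ edges) (Sum.inl A.init, 0) v

/-- Edge relation of a universal unfolding. -/
def UnivUnfolding.edgeRel {A : ABA V Q} (U : UnivUnfolding A) (a b : UVert V Q) : Prop :=
  (a, b) ∈ U.edges

/-- The universal syntactic condition for `p`: no universal unfolding contains both
`(p, i)` and `(¬p, i)` for any timestep `i`. -/
def UnivSyntacticCond (A : ABA V Q) (p : V) : Prop :=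
  ∀ U : UnivUnfolding A, ∀ i : ℕ,
    ¬ ((Sum.inr (p, true), i) ∈ U.verts ∧ (Sum.inr (p, false), i) ∈ U.verts)

/-- `q` and `q'` are existentially in conflict for `p`. -/
def ExConflict (A : ABA V Q) (p : V) (q q' : Q) : Prop :=
  ∃ U : ExUnfolding A, ∃ i : ℕ,
    (Sum.inl q, i) ∈ U.verts ∧ (Sum.inl q', i) ∈ U.verts ∧
    ∃ i' : ℕ,
      Relation.ReflTransGen U.edgeRel (Sum.inl q, i) (Sum.inr (p, true), i') ∧
      Relation.ReflTransGen U.edgeRel (Sum.inl q', i) (Sum.inr (p, false), i')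

/-- `q` and `q'` are universally in conflict for `p`. -/
def UnivConflict (A : ABA V Q) (p : V) (q q' : Q) : Prop :=
  ∃ U : UnivUnfolding A, ∃ i : ℕ,
    (Sum.inl q, i) ∈ U.verts ∧ (Sum.inl q', i) ∈ U.verts ∧
    ∃ i' : ℕ,
      Relation.ReflTransGen U.edgeRel (Sum.inl q, i) (Sum.inr (p, true), i') ∧
      Relation.ReflTransGen U.edgeRel (Sum.inl q', i) (Sum.inr (p, false), i')

end ABAKC
namespace ABAKC

variable {V Q : Type}

/-! ### Conflict-detection automata -/

/-- Transition relation of the nondeterministic safety automaton deciding existential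
conflict of `q` and `q'`: from `(q1, q2, b)` to `(q1', q2', b')` whenever
`b' = b ∨ (q1 = q ∧ q2 = q')` and there is a set `X` containing `q1'` and `q2'` that is a
minimal satisfying assignment of both `δ(q1)` and `δ(q2)`. -/
def exConfStep (A : ABA V Q) (q q' : Q) (s s' : Q × Q × Bool) : Prop :=
  (s'.2.2 = true ↔ (s.2.2 = true ∨ (s.1 = q ∧ s.2.1 = q'))) ∧
  ∃ X : Set (Q ⊕ Lit V), Sum.inl s'.1 ∈ X ∧ Sum.inl s'.2.1 ∈ X ∧
    X ∈ (A.tr s.1).mSat ∧ X ∈ (A.tr s.2.1).mSat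

/-- Nonemptiness of the existential-conflict automaton: some finite run from
`(q0, q0, false)` reaches, with flag `true`, an accepting target `(p, ¬p, true)` or
`(¬p, p, true)`, i.e., a common minimal satisfying assignment containing both
`p`-literals. -/
def exConfAutNonempty (A : ABA V Q) (q q' : Q) (p : V) : Prop :=
  ∃ (n : ℕ) (σ : ℕ → Q × Q × Bool),
    σ 0 = (A.init, A.init, false) ∧
    (∀ k < n, exConfStep A q q' (σ k) (σ (k + 1))) ∧
    ((σ n).2.2 = true ∨ ((σ n).1 = q ∧ (σ n).2.1 = q')) ∧
    ∃ X : Set (Q ⊕ Lit V),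
      X ∈ (A.tr (σ n).1).mSat ∧ X ∈ (A.tr (σ n).2.1).mSat ∧
      Sum.inr (p, true) ∈ X ∧ Sum.inr (p, false) ∈ X

/-- Transition relation of the nondeterministic safety automaton deciding universal
conflict of `q` and `q'`: as in the existential case, but `q1'` and `q2'` may come from
two different minimal satisfying assignments `X` and `X'`. -/
def univConfStep (A : ABA V Q) (q q' : Q) (s s' : Q × Q × Bool) : Prop :=
  (s'.2.2 = true ↔ (s.2.2 = true ∨ (s.1 = q ∧ s.2.1 = q'))) ∧
  ∃ X X' : Set (Q ⊕ Lit V), Sum.inl s'.1 ∈ X ∧ Sum.inl s'.2.1 ∈ X' ∧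
    X ∈ (A.tr s.1).mSat ∧ X' ∈ (A.tr s.2.1).mSat

/-- Nonemptiness of the universal-conflict automaton. -/
def univConfAutNonempty (A : ABA V Q) (q q' : Q) (p : V) : Prop :=
  ∃ (n : ℕ) (σ : ℕ → Q × Q × Bool),
    σ 0 = (A.init, A.init, false) ∧
    (∀ k < n, univConfStep A q q' (σ k) (σ (k + 1))) ∧
    ((σ n).2.2 = true ∨ ((σ n).1 = q ∧ (σ n).2.1 = q')) ∧
    ∃ X X' : Set (Q ⊕ Lit V),
      X ∈ (A.tr (σ n).1).mSat ∧ X' ∈ (A.tr (σ n).2.1).mSat ∧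
      ((Sum.inr (p, true) ∈ X ∧ Sum.inr (p, false) ∈ X') ∨
       (Sum.inr (p, false) ∈ X ∧ Sum.inr (p, true) ∈ X'))

/-! ### Compilation constructions -/

/-- Macro-states: subsets of the conflict set `M`. -/
abbrev MacroState [DecidableEq Q] (M : Finset Q) := {X : Finset Q // X ⊆ M}

/-- State space of the compiled automata: `2^M ∪ (Q ∖ M)`. -/
abbrev CompState [DecidableEq Q] (M : Finset Q) := MacroState M ⊕ {a : Q // a ∉ M}

/-- The substitution `δ(q)[X'↦1, M∖X'↦0]`, re-targeting the remaining state variables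
(which lie outside `M`) to the compiled state space. -/
def compSubst [DecidableEq Q] (M X' : Finset Q) (B : PosBool (Q ⊕ Lit V)) :
    PosBool (CompState M ⊕ Lit V) :=
  B.bind fun x =>
    match x with
    | Sum.inl s =>
        if s ∈ X' then PosBool.tt
        else if h : s ∈ M then PosBool.ff
        else PosBool.var (Sum.inl (Sum.inr ⟨s, h⟩))
    | Sum.inr l => PosBool.var (Sum.inr l)

/-- The macro-state variable corresponding to `X' ⊆ M`. -/
def macroVar [DecidableEq Q] (M : Finset Q) (X' : {Y : Finset Q // Y ∈ M.powerset}) :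
    PosBool (CompState M ⊕ Lit V) :=
  PosBool.var (Sum.inl (Sum.inl ⟨X'.1, Finset.mem_powerset.mp X'.2⟩))

/-- The existential compilation of `A` with respect to `M ⊆ Q`: a safety automaton with
states `2^M ∪ (Q∖M)`, `δ'(q) = ⋁_{X'⊆M} (X' ∧ δ(q)[X'↦1, M∖X'↦0])` for `q ∈ Q∖M`, and
`δ'(X) = ⋁_{X'⊆M} (X' ∧ ⋀_{q∈X} δ(q)[X'↦1, M∖X'↦0])` for macro-states `X ⊆ M`. -/
noncomputable def exCompile [DecidableEq Q] (A : ABA V Q) (M : Finset Q) : ABA V (CompState M) where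
  init :=
    if h : A.init ∈ M then Sum.inl ⟨{A.init}, Finset.singleton_subset_iff.mpr h⟩
    else Sum.inr ⟨A.init, h⟩
  tr := fun s =>
    bigOr (M.powerset.attach.toList.map fun X' =>
      PosBool.and (macroVar M X')
        (match s with
          | Sum.inr a => compSubst M X'.1 (A.tr a.1)
          | Sum.inl X => bigAnd (X.1.toList.map fun b => compSubst M X'.1 (A.tr b))))
  acc := Set.univ

/-- The universal compilation of `A` with respect to `M ⊆ Q`: a safety automaton with
states `2^M ∪ (Q∖M)`, `δ'(q) = ⋀_{X'⊆M} (X' ∧ δ(q)[X'↦1, M∖X'↦0])` for `q ∈ Q∖M`, and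
`δ'(X) = ⋀_{X'⊆M} (X' ∧ ⋁_{q∈X} δ(q)[X'↦1, M∖X'↦0])` for macro-states `X ⊆ M`. -/
noncomputable def univCompile [DecidableEq Q] (A : ABA V Q) (M : Finset Q) : ABA V (CompState M) where
  init :=
    if h : A.init ∈ M then Sum.inl ⟨{A.init}, Finset.singleton_subset_iff.mpr h⟩
    else Sum.inr ⟨A.init, h⟩
  tr := fun s =>
    bigAnd (M.powerset.attach.toList.map fun X' =>
      PosBool.and (macroVar M X')
        (match s with
          | Sum.inr a => compSubst M X'.1 (A.tr a.1)
          | Sum.inl X => bigOr (X.1.toList.map fun b => compSubst M X'.1 (A.tr b))))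
  acc := Set.univ

/-- `M` over-approximates the states existentially in conflict for `p`:
every state in an existential conflict lies in `M`. -/
def ExOverApprox (A : ABA V Q) (p : V) (M : Finset Q) : Prop :=
  ∀ q q' : Q, ExConflict A p q q' → q ∈ M ∧ q' ∈ M

/-- `M` over-approximates the states universally in conflict for `p`. -/
def UnivOverApprox (A : ABA V Q) (p : V) (M : Finset Q) : Prop :=
  ∀ q q' : Q, UnivConflict A p q q' → q ∈ M ∧ q' ∈ M

/-- A run whose state-labeled nodes have children labels forming a *minimal* satisfying
assignment of the transition formula. -/
structure MinRun (A : ABA V Q) (w : Word V) extends Run A w where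
  min_step : ∀ n ∈ nodes, ∀ q : Q, label n = Sum.inl q →
    {x | ∃ d : ℕ, n ++ [d] ∈ nodes ∧ label (n ++ [d]) = x} ∈ (A.tr q).mSat

/-! ### Fixpoint labelings -/

/-- `post(q)`: the state parts of the minimal satisfying assignments of `δ(q)`. -/
def statePost (A : ABA V Q) (q : Q) : Set (Set Q) :=
  {Y | ∃ X ∈ (A.tr q).mSat, Y = {s : Q | Sum.inl s ∈ X}}

/-- The `p`-literals appearing in some minimal satisfying assignment of `δ(q)`,
i.e., `l(q) ∩ L_{p}`. -/
def pLits (A : ABA V Q) (p : V) (q : Q) : Set (Lit V) :=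
  {l | l.1 = p ∧ ∃ X ∈ (A.tr q).mSat, Sum.inr l ∈ X}

/-- One step of the successor relation on states induced by `post`. -/
def stepRel (A : ABA V Q) (a b : Q) : Prop := ∃ X ∈ statePost A a, b ∈ X

/-- Reachability between states along `post`. -/
def stateReach (A : ABA V Q) (a b : Q) : Prop := Relation.ReflTransGen (stepRel A) a b

/-- The labeling of the existential conflict fixpoint algorithm:
`l[q,0] = { l(q) ∩ L_{p} }` and
`l[q,i] = ⋃_{X ∈ post(q)} { ⋃_{q'∈X} ⋃_{u ∈ l[q',i−1]} u }`. -/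
def exLabel (A : ABA V Q) (p : V) : ℕ → Q → Set (Set (Lit V))
  | 0, q => {pLits A p q}
  | i + 1, q => {S | ∃ X ∈ statePost A q, S = ⋃ q' ∈ X, ⋃ u ∈ exLabel A p i q', u}

/-- The labeling of the universal conflict fixpoint algorithm:
`l[q,0] = { l(q) ∩ L_{p} }` and
`l[q,i] = { ⋃_{X ∈ post(q)} ⋃_{q'∈X} ⋃_{u ∈ l[q',i−1]} u }`. -/
def univLabel (A : ABA V Q) (p : V) : ℕ → Q → Set (Set (Lit V))
  | 0, q => {pLits A p q}
  | i + 1, q => {⋃ X ∈ statePost A q, ⋃ q' ∈ X, ⋃ u ∈ univLabel A p i q', u}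

/-- The conflict set returned by the existential fixpoint algorithm: all states added
(at some iteration) because two conjunctive successors `q', q''` in a common
`X ∈ post(q)` carried different labels, together with everything they reach. -/
def exConfs (A : ABA V Q) (p : V) : Set Q :=
  {s | ∃ i : ℕ, ∃ q : Q, ∃ X ∈ statePost A q, ∃ q' ∈ X, ∃ q'' ∈ X,
    exLabel A p i q' ≠ exLabel A p i q'' ∧
    (s = q' ∨ s = q'' ∨ stateReach A q' s ∨ stateReach A q'' s)}

/-- The conflict set returned by the universal fixpoint algorithm: all states added
(at some iteration) because two disjunctive successors `q' ∈ X`, `q'' ∈ X'` of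
distinct `X, X' ∈ post(q)` carried different labels, together with everything they
reach. -/
def univConfs (A : ABA V Q) (p : V) : Set Q :=
  {s | ∃ i : ℕ, ∃ q : Q, ∃ X ∈ statePost A q, ∃ X' ∈ statePost A q,
    ∃ q' ∈ X, ∃ q'' ∈ X',
    univLabel A p i q' ≠ univLabel A p i q'' ∧
    (s = q' ∨ s = q'' ∨ stateReach A q' s ∨ stateReach A q'' s)}

end ABAKC

namespace ABAKC

/-! ### Evaluation of positive Boolean formulas -/

theorem PosBool.eval_mono {α : Type} (B : PosBool α) {X Y : Set α} (h : X ⊆ Y)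
    (hX : B.eval X) : B.eval Y := by
  induction B with
  | tt => trivial
  | ff => exact hX
  | var a => exact h hX
  | and f g hf hg => exact ⟨hf hX.1, hg hX.2⟩
  | or f g hf hg => exact hX.imp hf hg

theorem PosBool.eval_bind {α β : Type} (B : PosBool α) (f : α → PosBool β) (Y : Set β) :
    (B.bind f).eval Y ↔ B.eval {x | (f x).eval Y} := by
  induction B with
  | tt => exact Iff.rfl
  | ff => exact Iff.rfl
  | var a => exact Iff.rfl
  | and g h hg hh => exact and_congr hg hh
  | or g h hg hh => exact or_congr hg hh

theorem eval_bigOr {α : Type} (l : List (PosBool α)) (Y : Set α) :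
    (bigOr l).eval Y ↔ ∃ b ∈ l, b.eval Y := by
  induction l with
  | nil => simp [bigOr, PosBool.eval]
  | cons b l ih => simp [bigOr, PosBool.eval, ih]

theorem eval_bigAnd {α : Type} (l : List (PosBool α)) (Y : Set α) :
    (bigAnd l).eval Y ↔ ∀ b ∈ l, b.eval Y := by
  induction l with
  | nil => simp [bigAnd, PosBool.eval]
  | cons b l ih => simp [bigAnd, PosBool.eval, ih]

theorem exists_mSat_subset {α : Type} [Finite α] (B : PosBool α) {Y : Set α} (hY : B.eval Y) :
    ∃ Z ∈ B.mSat, Z ⊆ Y := by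
  obtain ⟨Z, hZY, hZ⟩ := exists_minimal_le_of_wellFoundedLT (fun X => B.eval X) Y hY
  refine ⟨Z, ⟨hZ.prop, fun X hX hBX => ?_⟩, hZY⟩
  exact hX.2 (hZ.le_of_le hBX hX.1)

/-- The assignment induced by a set `S` of states and a letter `σ`: the states of `S` and the
literals that hold in `σ`. -/
def stepSet {V Q : Type} (S : Set Q) (σ : Set V) : Set (Q ⊕ Lit V) :=
  {x | (∃ q ∈ S, x = Sum.inl q) ∨ ∃ l, litHolds σ l ∧ x = Sum.inr l}

@[simp] theorem inl_mem_stepSet {V Q : Type} {S : Set Q} {σ : Set V} {q : Q} :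
    (Sum.inl q : Q ⊕ Lit V) ∈ stepSet S σ ↔ q ∈ S := by
  simp [stepSet]

@[simp] theorem inr_mem_stepSet {V Q : Type} {S : Set Q} {σ : Set V} {l : Lit V} :
    (Sum.inr l : Q ⊕ Lit V) ∈ stepSet S σ ↔ litHolds σ l := by
  constructor
  · rintro (⟨_, _, h⟩ | ⟨_, hl, h⟩)
    · cases h
    · cases h
      exact hl
  · exact fun h => Or.inr ⟨l, h, rfl⟩

/-! ### Run trees of safety automata as sequences of state sets -/

/-- A sequence of state sets witnessing acceptance by a safety automaton: `S i` plays the role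
of the set of states occurring at depth `i` of a run tree. -/
def LevelRun {V Q : Type} (A : ABA V Q) (w : Word V) (S : ℕ → Set Q) : Prop :=
  A.init ∈ S 0 ∧ ∀ i, ∀ q ∈ S i, (A.tr q).eval (stepSet (S (i + 1)) (w i))

theorem Run.exists_levelRun {V Q : Type} {A : ABA V Q} {w : Word V} (ρ : Run A w) :
    ∃ S, LevelRun A w S := by
  refine ⟨fun i => {q | ∃ n ∈ ρ.nodes, n.length = i ∧ ρ.label n = Sum.inl q},
    ⟨[], ρ.root_mem, rfl, ρ.root_label⟩, ?_⟩
  rintro i q ⟨n, hn, rfl, hq⟩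
  refine PosBool.eval_mono _ ?_ (ρ.step n hn q hq)
  rintro x ⟨d, hd, rfl⟩
  cases hx : ρ.label (n ++ [d]) with
  | inl q' => exact inl_mem_stepSet.2 ⟨_, hd, by simp, hx⟩
  | inr l => simpa using ρ.lit_ok _ hd l hx

/-- Children of a node are numbered through a surjection `e` from `ℕ` onto the labels, and the
label of a nonempty node is read off its last entry. Literal nodes are leaves, so that infinite
branches consist of states only. -/
theorem LevelRun.mem_lang {V Q : Type} [Finite V] [Finite Q] {A : ABA V Q} (hA : A.Safety)
    {w : Word V} {S : ℕ → Set Q} (hS : LevelRun A w S) : w ∈ A.lang := by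
  have : Nonempty (Q ⊕ Lit V) := ⟨Sum.inl A.init⟩
  obtain ⟨e, he⟩ := exists_surjective_nat (Q ⊕ Lit V)
  let lab : List ℕ → Q ⊕ Lit V := fun n => (n.getLast?.map e).getD (Sum.inl A.init)
  have lab_snoc : ∀ n d, lab (n ++ [d]) = e d := by intro n d; simp [lab]
  let nodes : Set (List ℕ) := {n |
    (∀ k d, n[k]? = some d → e d ∈ stepSet (S (k + 1)) (w k)) ∧
    (∀ k d d', n[k]? = some d → n[k + 1]? = some d' → ∃ q, e d = Sum.inl q)}
  have snoc_mem : ∀ n d, n ++ [d] ∈ nodes → e d ∈ stepSet (S (n.length + 1)) (w n.length) :=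
    fun n d h => h.1 n.length d (by simp)
  let ρ : Run A w :=
    { nodes := nodes
      label := lab
      root_mem := by simp [nodes]
      prefix_closed := by
        rintro m n hn ⟨r, rfl⟩
        have aux : ∀ k d : ℕ, m[k]? = some d → (m ++ r)[k]? = some d := by
          intro k d h
          rw [List.getElem?_append_left, h]
          exact (List.getElem?_eq_some_iff.1 h).1
        exact ⟨fun k d h => hn.1 k d (aux k d h),
          fun k d d' h h' => hn.2 k d d' (aux k d h) (aux _ d' h')⟩
      root_label := by simp [lab]
      step := by
        intro n hn q hq
        have hqS : q ∈ S n.length := by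
          rcases List.eq_nil_or_concat' n with rfl | ⟨m, d, rfl⟩
          · have : A.init = q := by simpa [lab] using hq
            exact this ▸ hS.1
          · have h := snoc_mem m d hn
            rw [lab_snoc] at hq
            rw [hq, inl_mem_stepSet] at h
            simpa using h
        refine PosBool.eval_mono _ ?_ (hS.2 _ q hqS)
        intro x hx
        obtain ⟨d, rfl⟩ := he x
        refine ⟨d, ⟨?_, ?_⟩, lab_snoc n d⟩
        · intro k d' hk
          rcases lt_trichotomy k n.length with h | h | h
          · rw [List.getElem?_append_left h] at hk
            exact hn.1 k d' hk
          · subst h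
            have : d = d' := by simpa using hk
            exact this ▸ hx
          · rw [List.getElem?_eq_none (by simp; omega)] at hk
            cases hk
        · intro k d' d'' hk hk'
          rcases lt_trichotomy (k + 1) n.length with h | h | h
          · rw [List.getElem?_append_left (by omega)] at hk
            rw [List.getElem?_append_left h] at hk'
            exact hn.2 k d' d'' hk hk'
          · rcases List.eq_nil_or_concat' n with rfl | ⟨m, c, rfl⟩
            · simp at h
            · have hkm : k = m.length := by simpa using h
              subst hkm
              have : c = d' := by simpa using hk
              subst this
              exact ⟨q, by rw [← lab_snoc m c, hq]⟩
          · rw [List.getElem?_eq_none (by simp; omega)] at hk'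
            cases hk'
      lit_ok := by
        intro n hn l hl
        rcases List.eq_nil_or_concat' n with rfl | ⟨m, d, rfl⟩
        · simp [lab] at hl
        · have h := snoc_mem m d hn
          rw [lab_snoc] at hl
          rw [hl, inr_mem_stepSet] at h
          simpa using h }
  refine ⟨ρ, fun b hb k => ⟨k, le_rfl, ?_⟩⟩
  have hacc : ∀ q, q ∈ A.acc := fun q => by rw [show A.acc = Set.univ from hA]; trivial
  change ∃ q ∈ A.acc, lab _ = _
  cases k with
  | zero => exact ⟨A.init, hacc _, by simp [lab]⟩
  | succ k =>
    obtain ⟨q, hq⟩ := (hb (k + 2)).2 k (b k) (b (k + 1))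
      (by rw [List.getElem?_ofFn]; simp) (by rw [List.getElem?_ofFn]; simp)
    refine ⟨q, hacc q, ?_⟩
    rw [List.ofFn_succ', List.concat_eq_append, lab_snoc]
    simpa using hq

theorem mem_lang_iff {V Q : Type} [Finite V] [Finite Q] {A : ABA V Q} (hA : A.Safety)
    {w : Word V} : w ∈ A.lang ↔ ∃ S, LevelRun A w S :=
  ⟨fun ⟨ρ, _⟩ => ρ.exists_levelRun, fun ⟨_, hS⟩ => hS.mem_lang hA⟩

/-! ### Semantics of quantification and compilation -/

/-- The letter `σ` with the value of `p` set to `b`. -/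
def updLetter {V : Type} (p : V) (σ : Set V) (b : Bool) : Set V :=
  {a | (a ≠ p ∧ a ∈ σ) ∨ (a = p ∧ b = true)}

theorem litHolds_updLetter_self {V : Type} {p : V} {σ : Set V} {b c : Bool} :
    litHolds (updLetter p σ b) (p, c) ↔ c = b := by
  cases b <;> cases c <;> simp [litHolds, updLetter]

theorem litHolds_updLetter_ne {V : Type} {p a : V} (h : a ≠ p) {σ : Set V} {b c : Bool} :
    litHolds (updLetter p σ b) (a, c) ↔ litHolds σ (a, c) := by
  simp [litHolds, updLetter, h]

theorem eval_substP {V Q : Type} [DecidableEq V] (p : V) (b : Bool) (B : PosBool (Q ⊕ Lit V))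
    (S : Set Q) (σ : Set V) :
    (substP p b B).eval (stepSet S σ) ↔ B.eval (stepSet S (updLetter p σ b)) := by
  rw [substP, PosBool.eval_bind]
  have : {x : Q ⊕ Lit V | (match x with
      | Sum.inl q => PosBool.var (Sum.inl q)
      | Sum.inr (a, c) =>
          if a = p then (if c = b then PosBool.tt else PosBool.ff)
          else PosBool.var (Sum.inr (a, c)) : PosBool (Q ⊕ Lit V)).eval (stepSet S σ)} =
      stepSet S (updLetter p σ b) := by
    ext x
    rcases x with q | ⟨a, c⟩
    · simp [PosBool.eval]
    · by_cases ha : a = p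
      · subst ha
        by_cases hc : c = b <;> simp [PosBool.eval, hc, litHolds_updLetter_self]
      · simp [PosBool.eval, ha, litHolds_updLetter_ne]
  rw [← this]

/-- The states of `A` that a state of the compiled automaton stands for. -/
def members {Q : Type} [DecidableEq Q] {M : Finset Q} : CompState M → Set Q
  | Sum.inl X => {q | q ∈ X.1}
  | Sum.inr a => {a.1}

/-- The states of `A` imposed on the next level when the compiled automaton chooses the
macro-state `X` and moves to the set `T` of states: those of `X`, and the states of `T` that lie
outside `M`. -/
def expand {Q : Type} [DecidableEq Q] {M : Finset Q} (X : MacroState M)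
    (T : Set (CompState M)) : Set Q :=
  {q | q ∈ X.1 ∨ ∃ h : q ∉ M, Sum.inr ⟨q, h⟩ ∈ T}

theorem eval_compSubst {V Q : Type} [DecidableEq Q] {M : Finset Q} (X : MacroState M)
    (B : PosBool (Q ⊕ Lit V)) (T : Set (CompState M)) (σ : Set V) :
    (compSubst M X.1 B).eval (stepSet T σ) ↔ B.eval (stepSet (expand X T) σ) := by
  rw [compSubst, PosBool.eval_bind]
  have : {x : Q ⊕ Lit V | (match x with
      | Sum.inl s =>
          if s ∈ X.1 then PosBool.tt
          else if h : s ∈ M then PosBool.ff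
          else PosBool.var (Sum.inl (Sum.inr ⟨s, h⟩))
      | Sum.inr l => PosBool.var (Sum.inr l) : PosBool (CompState M ⊕ Lit V)).eval
        (stepSet T σ)} = stepSet (expand X T) σ := by
    ext x
    rcases x with s | l
    · by_cases hX : s ∈ X.1
      · simp [PosBool.eval, hX, expand]
      · by_cases hs : s ∈ M <;> simp [PosBool.eval, hX, hs, expand]
    · simp [PosBool.eval]
  rw [← this]

theorem eval_exCompile {V Q : Type} [DecidableEq Q] (A : ABA V Q) (M : Finset Q)
    (s : CompState M) (T : Set (CompState M)) (σ : Set V) :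
    ((exCompile A M).tr s).eval (stepSet T σ) ↔
      ∃ X : MacroState M, Sum.inl X ∈ T ∧
        ∀ q ∈ members s, (A.tr q).eval (stepSet (expand X T) σ) := by
  have key : ∀ X : MacroState M,
      ((match s with
          | Sum.inr a => compSubst M X.1 (A.tr a.1)
          | Sum.inl Y => bigAnd (Y.1.toList.map fun b => compSubst M X.1 (A.tr b)) :
            PosBool (CompState M ⊕ Lit V)).eval (stepSet T σ)) ↔
        ∀ q ∈ members s, (A.tr q).eval (stepSet (expand X T) σ) := by
    intro X
    rcases s with Y | a
    · simp [eval_bigAnd, members, eval_compSubst]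
    · simp [members, eval_compSubst]
  simp only [exCompile, eval_bigOr, List.mem_map, Finset.mem_toList, Finset.mem_attach,
    true_and]
  constructor
  · rintro ⟨_, ⟨X, rfl⟩, h⟩
    refine ⟨⟨X.1, Finset.mem_powerset.mp X.2⟩, inl_mem_stepSet.1 h.1, (key _).1 h.2⟩
  · rintro ⟨X, hX, h⟩
    exact ⟨_, ⟨⟨X.1, Finset.mem_powerset.mpr X.2⟩, rfl⟩, inl_mem_stepSet.2 hX, (key X).2 h⟩

theorem levelRun_sExists_exCompile {V Q : Type} [DecidableEq V] [DecidableEq Q] (A : ABA V Q)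
    (M : Finset Q) (p : V) (w : Word V) (T : ℕ → Set (CompState M)) :
    LevelRun ((exCompile A M).sExists p) w T ↔
      (exCompile A M).init ∈ T 0 ∧ ∀ i, ∀ s ∈ T i, ∃ b : Bool, ∃ X : MacroState M,
        Sum.inl X ∈ T (i + 1) ∧ ∀ q ∈ members s,
          (A.tr q).eval (stepSet (expand X (T (i + 1))) (updLetter p (w i) b)) := by
  refine and_congr Iff.rfl (forall₃_congr fun i s _ => ?_)
  change (PosBool.eval _ _ ∨ PosBool.eval _ _) ↔ _
  rw [eval_substP, eval_substP, eval_exCompile, eval_exCompile, Bool.exists_bool, or_comm]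

theorem mem_members_init {V Q : Type} [DecidableEq Q] (A : ABA V Q) (M : Finset Q) (q : Q) :
    q ∈ members (exCompile A M).init ↔ q = A.init := by
  by_cases h : A.init ∈ M <;> simp [exCompile, h, members]

/-! ### From runs of `A` to runs of the compilation -/

/-- This inclusion holds for every `M`: a run with level sets `S` yields the compiled run in which
every state chooses the macro-state `S (i + 1) ∩ M`. -/
theorem existsLang_subset {V Q : Type} [Finite V] [Finite Q] [DecidableEq V] [DecidableEq Q]
    (A : ABA V Q) (hSafe : A.Safety) (p : V) (M : Finset Q) :
    A.existsLang p ⊆ ((exCompile A M).sExists p).langWithout p := by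
  classical
  rintro _ ⟨t, ht, rfl⟩
  obtain ⟨S, hS0, hS⟩ := (mem_lang_iff hSafe).1 ht
  refine ⟨(mem_lang_iff (show ((exCompile A M).sExists p).Safety from rfl)).2
    ⟨fun i => {s | members s ⊆ S i}, ?_⟩, fun i => by simp [projWord]⟩
  rw [levelRun_sExists_exCompile]
  refine ⟨?_, fun i s hs => ?_⟩
  · intro q hq
    rw [(mem_members_init A M q).1 hq]
    exact hS0
  refine ⟨decide (p ∈ t i), ⟨M.filter (· ∈ S (i + 1)), Finset.filter_subset _ _⟩, ?_, ?_⟩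
  · intro q hq
    exact (Finset.mem_filter.1 hq).2
  · intro q hq
    have hletter : updLetter p (projWord p t i) (decide (p ∈ t i)) = t i := by
      ext a
      by_cases ha : a = p
      · subst ha; simp [updLetter]
      · simp [updLetter, projWord, ha]
    rw [hletter]
    refine PosBool.eval_mono _ ?_ (hS i q (hs hq))
    rintro x (⟨q', hq', rfl⟩ | ⟨l, hl, rfl⟩)
    · rw [inl_mem_stepSet]
      by_cases hM : q' ∈ M
      · exact Or.inl (Finset.mem_filter.2 ⟨hM, hq'⟩)
      · exact Or.inr ⟨hM, by simpa [members] using hq'⟩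
    · exact inr_mem_stepSet.2 hl

/-! ### Unfoldings generated by a choice of successors -/

/-- The edge relation induced by a choice `Z` of a successor set for each state and timestep. -/
def choiceEdge {V Q : Type} (Z : Q → ℕ → Set (Q ⊕ Lit V)) (a b : UVert V Q) : Prop :=
  ∃ q, a.1 = Sum.inl q ∧ b.2 = a.2 + 1 ∧ b.1 ∈ Z q a.2

/-- The existential unfolding reachable from the root under a choice `Z` of minimal satisfying
assignments. Minimality is only required at the states of an invariant `R` that contains the
initial state and is closed under the chosen successors. -/
def choiceUnfolding {V Q : Type} (A : ABA V Q) (Z : Q → ℕ → Set (Q ⊕ Lit V)) (R : ℕ → Set Q)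
    (h0 : A.init ∈ R 0) (hZ : ∀ i, ∀ q ∈ R i, Z q i ∈ (A.tr q).mSat)
    (hR : ∀ i, ∀ q ∈ R i, ∀ q', Sum.inl q' ∈ Z q i → q' ∈ R (i + 1)) : ExUnfolding A where
  verts := {v | Relation.ReflTransGen (choiceEdge Z) (Sum.inl A.init, 0) v}
  edges := {e | Relation.ReflTransGen (choiceEdge Z) (Sum.inl A.init, 0) e.1 ∧
    choiceEdge Z e.1 e.2}
  root_mem := Relation.ReflTransGen.refl
  edges_sub := fun _ he => ⟨he.1, he.1.tail he.2⟩
  edge_shape := by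
    rintro e ⟨_, q, hq, h, _⟩
    exact ⟨⟨q, hq⟩, h⟩
  succ := by
    intro q i hv
    have inv : ∀ v, Relation.ReflTransGen (choiceEdge Z) (Sum.inl A.init, 0) v →
        ∀ q, v.1 = Sum.inl q → q ∈ R v.2 := by
      intro v hv
      induction hv with
      | refl => intro q hq; cases hq; exact h0
      | tail _ hbc ih =>
        intro q hq
        obtain ⟨q₀, h1, h2, h3⟩ := hbc
        rw [h2]
        exact hR _ q₀ (ih q₀ h1) q (hq ▸ h3)
    refine ⟨Z q i, hZ i q (inv _ hv q rfl), fun x hx => ?_, ?_⟩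
    · have he : choiceEdge Z (Sum.inl q, i) (x, i + 1) := ⟨q, rfl, rfl, hx⟩
      exact ⟨Relation.ReflTransGen.tail hv he, hv, he⟩
    · rintro u ⟨_, q', h1, h2, h3⟩
      cases h1
      exact ⟨h2, h3⟩
  minimal := by
    intro v hv
    induction hv with
    | refl => exact Relation.ReflTransGen.refl
    | tail hab hbc ih => exact ih.tail ⟨hab, hbc⟩

namespace ExUnfolding

variable {V Q : Type} {A : ABA V Q} (U : ExUnfolding A)

theorem level_le {a b : UVert V Q} (h : Relation.ReflTransGen U.edgeRel a b) : a.2 ≤ b.2 := by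
  induction h with
  | refl => exact le_rfl
  | tail _ hbc ih =>
    have := (U.edge_shape _ hbc).2
    simp only at this
    omega

theorem mem_verts_of_reach {a b : UVert V Q} (ha : a ∈ U.verts)
    (h : Relation.ReflTransGen U.edgeRel a b) : b ∈ U.verts := by
  cases h with
  | refl => exact ha
  | tail _ hbc => exact (U.edges_sub _ hbc).2

/-- A path from the root passes through a state at every earlier timestep. -/
theorem exists_ancestor {v : UVert V Q} (hv : v ∈ U.verts) {k : ℕ} (hk : k < v.2) :
    ∃ q, (Sum.inl q, k) ∈ U.verts ∧ Relation.ReflTransGen U.edgeRel (Sum.inl q, k) v := by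
  have h := U.minimal v hv
  clear hv
  induction h with
  | refl => exact absurd hk (by simp)
  | @tail b c _ hbc ih =>
    obtain ⟨⟨q, hq⟩, h2⟩ := U.edge_shape _ hbc
    simp only at hq h2
    rcases Nat.lt_or_ge k b.2 with hkb | hkb
    · obtain ⟨q', hq', hr⟩ := ih hkb
      exact ⟨q', hq', hr.tail hbc⟩
    · obtain rfl : k = b.2 := by omega
      have hb : b = (Sum.inl q, b.2) := Prod.ext hq rfl
      refine ⟨q, hb ▸ (U.edges_sub _ hbc).1, Relation.ReflTransGen.single ?_⟩
      rw [← hb]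
      exact hbc

/-- If both `p`-literals occur at the same timestep, every state on a path to one of them is in
conflict with a state on a path to the other one, hence lies in `M`. -/
theorem mem_of_reach_lit {p : V} {M : Finset Q} (hM : ExOverApprox A p M) {j : ℕ}
    (hj : ∀ β : Bool, (Sum.inr (p, β), j) ∈ U.verts) {q : Q} {k : ℕ}
    (hq : (Sum.inl q, k) ∈ U.verts) {β : Bool}
    (hr : Relation.ReflTransGen U.edgeRel (Sum.inl q, k) (Sum.inr (p, β), j)) : q ∈ M := by
  have hkj : k < j := by
    rcases Relation.ReflTransGen.cases_head hr with h | ⟨c, hc, hcj⟩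
    · cases h
    · have h1 := (U.edge_shape _ hc).2
      have h2 := U.level_le hcj
      simp only at h1 h2
      omega
  obtain ⟨q', hq', hr'⟩ := U.exists_ancestor (hj (!β)) hkj
  cases β with
  | true => exact (hM q q' ⟨U, k, hq, hq', j, hr, hr'⟩).1
  | false => exact (hM q' q ⟨U, k, hq', hq, j, hr', hr⟩).2

end ExUnfolding

/-! ### From runs of the compilation to runs of `A` -/

/-- From a compiled run with level sets `T`, each state `q` at timestep `i` is assigned a compiled
state `c q i` of `T i` standing for it, whose choices it follows. Precedence is given to the
principal chain `P`, formed by the initial state and the macro-states chosen successively from it.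
In the resulting unfolding of `A`, a path all of whose states lie in `M` follows the principal
chain, so two clashing `p`-literals would come from one and the same choice of a value for `p`. -/
theorem langWithout_subset {V Q : Type} [Finite V] [Finite Q] [DecidableEq V] [DecidableEq Q]
    (A : ABA V Q) (hSafe : A.Safety) (p : V) (M : Finset Q) (hM : ExOverApprox A p M) :
    ((exCompile A M).sExists p).langWithout p ⊆ A.existsLang p := by
  classical
  rintro w ⟨hw, hwp⟩
  obtain ⟨T, hT⟩ := (mem_lang_iff (show ((exCompile A M).sExists p).Safety from rfl)).1 hw
  rw [levelRun_sExists_exCompile] at hT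
  obtain ⟨hT0, hT⟩ := hT
  have hT' : ∀ i s, ∃ b : Bool, ∃ X : MacroState M, s ∈ T i →
      Sum.inl X ∈ T (i + 1) ∧ ∀ q ∈ members s,
        (A.tr q).eval (stepSet (expand X (T (i + 1))) (updLetter p (w i) b)) := by
    intro i s
    by_cases hs : s ∈ T i
    · obtain ⟨b, X, h⟩ := hT i s hs
      exact ⟨b, X, fun _ => h⟩
    · exact ⟨true, ⟨∅, Finset.empty_subset _⟩, fun h => absurd h hs⟩
  choose b X hbX using hT'
  let P : ℕ → CompState M := fun n =>
    Nat.rec (exCompile A M).init (fun i s => Sum.inl (X i s)) n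
  have hP : ∀ i, P i ∈ T i := by
    intro i
    induction i with
    | zero => exact hT0
    | succ i ih => exact (hbX i _ ih).1
  let R : ℕ → Set Q := fun i => {q | ∃ s ∈ T i, q ∈ members s}
  have hc : ∀ q i, ∃ s : CompState M, (q ∈ R i → s ∈ T i ∧ q ∈ members s) ∧
      (q ∈ members (P i) → s = P i) := by
    intro q i
    by_cases h : q ∈ members (P i)
    · exact ⟨P i, fun _ => ⟨hP i, h⟩, fun _ => rfl⟩
    · by_cases hq : q ∈ R i
      · obtain ⟨s, hs⟩ := hq
        exact ⟨s, fun _ => hs, fun h' => absurd h' h⟩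
      · exact ⟨P i, fun h' => absurd h' hq, fun _ => rfl⟩
  choose c hcT hcP using hc
  let Y : Q → ℕ → Set (Q ⊕ Lit V) := fun q i =>
    stepSet (expand (X i (c q i)) (T (i + 1))) (updLetter p (w i) (b i (c q i)))
  have hZ' : ∀ q i, ∃ Z : Set (Q ⊕ Lit V), q ∈ R i → Z ∈ (A.tr q).mSat ∧ Z ⊆ Y q i := by
    intro q i
    by_cases hq : q ∈ R i
    · obtain ⟨h1, h2⟩ := hcT q i hq
      obtain ⟨Z, hZ⟩ := exists_mSat_subset _ ((hbX i _ h1).2 q h2)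
      exact ⟨Z, fun _ => hZ⟩
    · exact ⟨∅, fun h => absurd h hq⟩
  choose Z hZ using hZ'
  have hR0 : A.init ∈ R 0 := ⟨_, hT0, (mem_members_init A M _).2 rfl⟩
  have hRs : ∀ i, ∀ q ∈ R i, ∀ q', Sum.inl q' ∈ Z q i → q' ∈ R (i + 1) := by
    intro i q hq q' hq'
    rcases inl_mem_stepSet.1 ((hZ q i hq).2 hq') with h | ⟨h, hT1⟩
    · exact ⟨_, (hbX i _ (hcT q i hq).1).1, h⟩
    · exact ⟨_, hT1, rfl⟩
  let U : ExUnfolding A := choiceUnfolding A Z R hR0 (fun i q hq => (hZ q i hq).1) hRs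
  have hedge : ∀ {u v : UVert V Q}, (u, v) ∈ U.edges → choiceEdge Z u v := fun h => h.2
  have hUR : ∀ v, Relation.ReflTransGen U.edgeRel (Sum.inl A.init, 0) v →
      ∀ q, v.1 = Sum.inl q → q ∈ R v.2 := by
    intro v hv
    induction hv with
    | refl => intro q hq; cases hq; exact hR0
    | tail _ hbc ih =>
      intro q hq
      obtain ⟨q₀, h1, h2, h3⟩ := hedge hbc
      rw [h2]
      exact hRs _ q₀ (ih q₀ h1) q (hq ▸ h3)
  have hUR' : ∀ {q i}, (Sum.inl q, i) ∈ U.verts → q ∈ R i :=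
    fun h => hUR _ (U.minimal _ h) _ rfl
  have noConflict : ∀ j, ¬ ∀ β : Bool, (Sum.inr (p, β), j) ∈ U.verts := by
    intro j hj
    have principal : ∀ β : Bool, ∀ v, Relation.ReflTransGen U.edgeRel (Sum.inl A.init, 0) v →
        ∀ q, v.1 = Sum.inl q → Relation.ReflTransGen U.edgeRel v (Sum.inr (p, β), j) →
        c q v.2 = P v.2 := by
      intro β v hv
      induction hv with
      | refl =>
        intro q hq _
        cases hq
        exact hcP _ _ ((mem_members_init A M _).2 rfl)
      | @tail u v hu huv ih =>
        intro q hq hr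
        obtain ⟨q₀, h1, h2, h3⟩ := hedge huv
        have hcu := ih q₀ h1 (hr.head huv)
        have hv : v = (Sum.inl q, v.2) := Prod.ext hq rfl
        have hqM : q ∈ M :=
          U.mem_of_reach_lit hM hj (hv ▸ (U.edges_sub _ huv).2) (hv ▸ hr)
        rw [h2]
        apply hcP
        -- A chosen successor inside `M` can only come from the chosen macro-state.
        rw [hq] at h3
        rcases inl_mem_stepSet.1 ((hZ q₀ u.2 (hUR u hu q₀ h1)).2 h3) with h | ⟨h, _⟩
        · rw [hcu] at h
          exact h
        · exact absurd hqM h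
    have value : ∀ β : Bool, β = b (j - 1) (P (j - 1)) := by
      intro β
      rcases Relation.ReflTransGen.cases_tail (U.minimal _ (hj β)) with h | ⟨u, hu, huj⟩
      · cases h
      · obtain ⟨q, h1, h2, h3⟩ := hedge huj
        have hu2 : u.2 = j - 1 := by simp only at h2; omega
        have hlit := inr_mem_stepSet.1 ((hZ q u.2 (hUR u hu q h1)).2 h3)
        rw [litHolds_updLetter_self,
          principal β u hu q h1 (Relation.ReflTransGen.single huj), hu2] at hlit
        exact hlit
    exact Bool.noConfusion ((value true).trans (value false).symm)
  let t : Word V := fun i => updLetter p (w i) (decide ((Sum.inr (p, true), i + 1) ∈ U.verts))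
  refine ⟨t, (mem_lang_iff hSafe).2 ⟨fun i => {q | (Sum.inl q, i) ∈ U.verts}, U.root_mem, ?_⟩, ?_⟩
  · intro i q hq
    have hqR : q ∈ R i := hUR' hq
    obtain ⟨hZm, hZY⟩ := hZ q i hqR
    refine PosBool.eval_mono _ ?_ hZm.1
    have hsucc : ∀ x ∈ Z q i, (x, i + 1) ∈ U.verts := fun x hx =>
      Relation.ReflTransGen.tail hq ⟨q, rfl, rfl, hx⟩
    rintro (q' | ⟨a, β⟩) hx
    · exact inl_mem_stepSet.2 (hsucc _ hx)
    · rw [inr_mem_stepSet]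
      by_cases ha : a = p
      · subst ha
        rw [litHolds_updLetter_self]
        have h1 := hsucc _ hx
        cases β with
        | true => exact (decide_eq_true h1).symm
        | false =>
          exact (decide_eq_false fun h => noConflict (i + 1) fun β => by
            cases β <;> assumption).symm
      · have h := inr_mem_stepSet.1 (hZY hx)
        rw [litHolds_updLetter_ne ha] at h ⊢
        exact h
  · funext i
    ext a
    by_cases ha : a = p
    · subst ha
      simp [projWord, hwp i]
    · simp [projWord, t, updLetter, ha]

/-- For any over-approximation `M` of the existential conflicts of an
alternating safety automaton `A` for `p`, the state-wise existential quantification of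
the existential compilation of `A` w.r.t. `M` recognizes exactly `L(∃p.A)`. -/
theorem exCompile_framework {V Q : Type} [Fintype V] [Fintype Q] [DecidableEq V]
    [DecidableEq Q] (A : ABA V Q) (hSafe : A.Safety) (p : V) (M : Finset Q)
    (hM : ExOverApprox A p M) :
    ((exCompile A M).sExists p).langWithout p = A.existsLang p := by
  exact Set.Subset.antisymm (langWithout_subset A hSafe p M hM) (existsLang_subset A hSafe p M)

end ABAKC
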